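/- Consider a finite event trace (a list of events) satisfying: (i) the values of watermark events are nondecreasing along the trace; (ii) whenever a watermark event wm w precedes an event emb τ n in the trace, τ + L ≥ w; and (iii) after every prefix of the trace and for every τ, the pending count pend(τ) = (sum of n over emb τ n events in the prefix) − (number of suc τ events in the prefix) is nonnegative. Then, running the stream algorithm of Listing 3 with lateness parameter L over the trace, for every prefix, every watermark value W forwarded by the algorithm within that prefix and every timestamp τ with pend(τ) > 0 at the end of that prefix satisfy W ≤ τ + L: the algorithm enforces condition C2, i.e., a forwarded watermark never exceeds by more than the allowed lateness L the timestamp of any loop successor tuple that is still pending (Lemma 3). -/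

import Mathlib

/-- Events on the stream `S_E` feeding the first Aggregate `A₁` of the Unfold
operator: `emb τ n` is a tuple output by the Embed operator at timestamp `τ`
whose carried list announces `n` loop successors, `suc τ` is a looped
successor tuple with timestamp `τ`, and `wm w` is a watermark of value `w`. -/
inductive SEEvent : Type
  | emb (τ n : ℕ)
  | suc (τ : ℕ)
  | wm (w : ℕ)
deriving DecidableEq

/-- Pending count at timestamp `τ` after a prefix of events:
(sum of `n` over `emb τ n` events) − (number of `suc τ` events). -/
def pendZ (pre : List SEEvent) (τ : ℕ) : ℤ :=
  (pre.map (fun e =>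
    match e with
    | .emb τ' n => if τ' = τ then (n : ℤ) else 0
    | .suc τ' => if τ' = τ then (-1 : ℤ) else 0
    | .wm _ => 0)).sum

/-- The watermark values occurring in a trace, in order. -/
def wmValues (tr : List SEEvent) : List ℕ :=
  tr.filterMap (fun e => match e with | .wm w => some w | _ => none)

/-- State of the algorithm of Listing 3: the pending successor counts (a key
is absent iff its count is `0`), the bound `B ∈ ℕ ∪ {⊤}` on the watermarks
that may be forwarded, the FIFO queue of withheld watermarks, and the list of
watermarks forwarded so far. -/
structure C2State where
  pend : ℕ → ℕ
  B : WithTop ℕ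
  queue : List ℕ
  out : List ℕ

open scoped Classical in
/-- Common part of processing a tuple event in Listing 3: after updating the
pending counts to `pend'`, set `B` to (the least `τ` with `pend' τ > 0`) `+ L`
if such a `τ` exists and to `⊤` otherwise, then forward the most recently
queued watermark whose value is `≤ B`, discarding earlier queued ones. -/
noncomputable def afterTuple (L : ℕ) (s : C2State) (pend' : ℕ → ℕ) : C2State :=
  let B' : WithTop ℕ :=
    if _ : ∃ τ, 0 < pend' τ then ((sInf {τ | 0 < pend' τ} + L : ℕ) : WithTop ℕ)
    else ⊤
  let fwd := s.queue.takeWhile (fun w : ℕ => decide ((w : WithTop ℕ) ≤ B'))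
  { pend := pend'
    B := B'
    queue := s.queue.dropWhile (fun w : ℕ => decide ((w : WithTop ℕ) ≤ B'))
    out := s.out ++ (match fwd.getLast? with | some w => [w] | none => []) }

/-- One step of the algorithm of Listing 3: on `emb τ n` add `n` to the
pending count at key `τ`; on `suc τ` subtract `1` (the key is removed when it
reaches `0`); on a watermark `wm w`, forward `w` immediately if `w ≤ B` and
enqueue it otherwise. -/
noncomputable def c2Step (L : ℕ) (s : C2State) (e : SEEvent) : C2State :=
  match e with
  | .emb τ n => afterTuple L s (Function.update s.pend τ (s.pend τ + n))
  | .suc τ => afterTuple L s (Function.update s.pend τ (s.pend τ - 1))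
  | .wm w =>
      if (w : WithTop ℕ) ≤ s.B then { s with out := s.out ++ [w] }
      else { s with queue := s.queue ++ [w] }

/-- Running the algorithm of Listing 3 over a trace, starting with all
pending counts `0`, `B = ⊤`, an empty queue and no forwarded watermarks. -/
noncomputable def c2Run (L : ℕ) (tr : List SEEvent) : C2State :=
  tr.foldl (c2Step L) ⟨fun _ => 0, ⊤, [], []⟩

lemma afterTuple_B_le (L : ℕ) (s : C2State) (p : ℕ → ℕ) (τ : ℕ) (h : 0 < p τ) :
    (afterTuple L s p).B ≤ ((τ + L : ℕ) : WithTop ℕ) := by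
  have hex : ∃ τ, 0 < p τ := ⟨τ, h⟩
  have h1 : sInf {τ | 0 < p τ} ≤ τ := Nat.sInf_le h
  simp only [afterTuple, dif_pos hex]
  exact_mod_cast Nat.add_le_add_right h1 L

lemma afterTuple_out (L : ℕ) (s : C2State) (p : ℕ → ℕ) (W : ℕ)
    (h : W ∈ (afterTuple L s p).out) :
    W ∈ s.out ∨ (W ∈ s.queue ∧ (W : WithTop ℕ) ≤ (afterTuple L s p).B) := by
  simp only [afterTuple, List.mem_append] at h
  rcases h with h | h
  · exact Or.inl h
  · right
    split at h
    · rename_i w hw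
      simp only [List.mem_singleton] at h
      subst h
      have hm := List.mem_of_getLast? hw
      refine ⟨(List.takeWhile_prefix _).subset hm, ?_⟩
      have := List.mem_takeWhile_imp hm
      simpa only [afterTuple, decide_eq_true_eq] using this
    · simp at h

lemma afterTuple_queue (L : ℕ) (s : C2State) (p : ℕ → ℕ) (W : ℕ)
    (h : W ∈ (afterTuple L s p).queue) : W ∈ s.queue := by
  simp only [afterTuple] at h
  exact (List.dropWhile_suffix _).subset h

/-- The loop invariant of Listing 3. -/
structure C2Inv (L : ℕ) (pre : List SEEvent) (s : C2State) : Prop where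
  pend : ∀ τ, (s.pend τ : ℤ) = pendZ pre τ
  bound : ∀ τ, 0 < s.pend τ → s.B ≤ ((τ + L : ℕ) : WithTop ℕ)
  queue : ∀ w ∈ s.queue, SEEvent.wm w ∈ pre
  out : ∀ w ∈ s.out, SEEvent.wm w ∈ pre
  safe : ∀ w ∈ s.out, ∀ τ, 0 < s.pend τ → w ≤ τ + L

lemma C2Inv.tuple {L : ℕ} {pre : List SEEvent} {s : C2State} (hs : C2Inv L pre s)
    (e : SEEvent) (p : ℕ → ℕ) (hp : ∀ τ, (p τ : ℤ) = pendZ (pre ++ [e]) τ)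
    (hold : ∀ w ∈ s.out, ∀ τ, 0 < p τ → w ≤ τ + L) :
    C2Inv L (pre ++ [e]) (afterTuple L s p) := by
  refine ⟨hp, fun τ h => afterTuple_B_le L s p τ h, fun w hw => ?_, fun w hw => ?_,
    fun w hw τ hτ => ?_⟩
  · exact List.mem_append_left _ (hs.queue w (afterTuple_queue L s p w hw))
  · rcases afterTuple_out L s p w hw with h | h
    · exact List.mem_append_left _ (hs.out w h)
    · exact List.mem_append_left _ (hs.queue w h.1)
  · rcases afterTuple_out L s p w hw with h | h
    · exact hold w h τ hτ
    · exact_mod_cast h.2.trans (afterTuple_B_le L s p τ hτ)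

lemma c2Inv_run (L : ℕ) (trace : List SEEvent)
    (h_wm_emb : ∀ (l₁ l₂ rest : List SEEvent) (w τ n : ℕ),
      trace = l₁ ++ SEEvent.wm w :: l₂ ++ SEEvent.emb τ n :: rest → τ + L ≥ w)
    (h_pend_nonneg : ∀ pre, pre <+: trace → ∀ τ, 0 ≤ pendZ pre τ) (pre : List SEEvent) :
    pre <+: trace → C2Inv L pre (c2Run L pre) := by
  induction pre using List.reverseRecOn with
  | nil => intro _; constructor <;> simp [c2Run, pendZ]
  | append_singleton pre e ih =>
    intro hpre
    have hs := ih ((List.prefix_append pre [e]).trans hpre)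
    have hnn := h_pend_nonneg _ hpre
    have hrun : c2Run L (pre ++ [e]) = c2Step L (c2Run L pre) e := by simp [c2Run]
    rw [hrun]
    generalize c2Run L pre = s at hs
    cases e with
    | emb τ n =>
      refine hs.tuple _ _ (fun τ' => ?_) (fun w hw τ' hτ' => ?_)
      · have := hs.pend τ'
        by_cases h : τ' = τ
        · subst h; simp [pendZ] at this ⊢; omega
        · simp [pendZ, h, Ne.symm h] at this ⊢; omega
      · by_cases h : τ' = τ
        · subst h
          obtain ⟨rest, hrest⟩ := hpre
          obtain ⟨l₁, l₂, hl⟩ := List.append_of_mem (hs.out w hw)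
          exact h_wm_emb l₁ l₂ rest w τ' n (by rw [← hrest, hl]; simp)
        · exact hs.safe w hw τ' (by simpa [h] using hτ')
    | suc τ =>
      refine hs.tuple _ _ (fun τ' => ?_) (fun w hw τ' hτ' => ?_)
      · have := hs.pend τ'
        have h2 := hnn τ'
        by_cases h : τ' = τ
        · subst h; simp [pendZ] at this h2 ⊢; omega
        · simp [pendZ, h, Ne.symm h] at this ⊢; omega
      · by_cases h : τ' = τ
        · subst h
          refine hs.safe w hw τ' ?_
          simp at hτ'; omega
        · exact hs.safe w hw τ' (by simpa [h] using hτ')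
    | wm w =>
      have hp : ∀ τ, (s.pend τ : ℤ) = pendZ (pre ++ [SEEvent.wm w]) τ := by
        intro τ; rw [hs.pend τ]; simp [pendZ]
      simp only [c2Step]
      split
      · rename_i hB
        refine ⟨hp, hs.bound, fun v hv => List.mem_append_left _ (hs.queue v hv),
          fun v hv => ?_, fun v hv τ hτ => ?_⟩
        · rcases List.mem_append.1 hv with h | h
          · exact List.mem_append_left _ (hs.out v h)
          · simp at h; simp [h]
        · rcases List.mem_append.1 hv with h | h
          · exact hs.safe v h τ hτ
          · simp at h; subst h
            exact_mod_cast hB.trans (hs.bound τ hτ)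
      · refine ⟨hp, hs.bound, fun v hv => ?_,
          fun v hv => List.mem_append_left _ (hs.out v hv), hs.safe⟩
        rcases List.mem_append.1 hv with h | h
        · exact List.mem_append_left _ (hs.queue v h)
        · simp at h; simp [h]

/-- Lemma 3: over any trace in which (i) watermark values are nondecreasing,
(ii) a watermark `wm w` preceding an `emb τ n` event satisfies `τ + L ≥ w`,
and (iii) all pending counts stay nonnegative after every prefix, the
algorithm of Listing 3 enforces condition C2: for every prefix, every
watermark `W` forwarded within that prefix and every timestamp `τ` still
pending at the end of that prefix satisfy `W ≤ τ + L`. -/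
theorem listing3_enforces_C2 (L : ℕ) (trace : List SEEvent)
    (h_wm_mono : (wmValues trace).Pairwise (· ≤ ·))
    (h_wm_emb : ∀ (l₁ l₂ rest : List SEEvent) (w τ n : ℕ),
      trace = l₁ ++ SEEvent.wm w :: l₂ ++ SEEvent.emb τ n :: rest → τ + L ≥ w)
    (h_pend_nonneg : ∀ pre, pre <+: trace → ∀ τ, 0 ≤ pendZ pre τ) :
    ∀ pre, pre <+: trace → ∀ W ∈ (c2Run L pre).out, ∀ τ : ℕ,
      0 < pendZ pre τ → W ≤ τ + L := by
  intro pre hpre W hW τ hτ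
  have hs := c2Inv_run L trace h_wm_emb h_pend_nonneg pre hpre
  refine hs.safe W hW τ ?_
  have := hs.pend τ
  omega
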